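/- Let k ≥ 100 be an integer and set γ = 10⁻², η = 5·10⁻⁵. Let f : Finset E → ℝ be non-negative, monotone, submodular. Let D, D_L, S_L, S_R be finsets and OPT ≥ 0 a real with f(D) ≥ (1−γ)/2 · OPT. Assume S_L ∩ S_R = ∅, |S_L| < k/100, |S_L| + |S_R| = k, D_L ⊆ D with |D_L| ≤ 0.95·η·k and f(D_L) ≥ 0.85 · f(D), f(e|S_L) ≤ 100·OPT/k for every e ∈ D_L, and f(S_L ∪ S_R) ≥ f(S_L) + |S_R| · OPT/(10k). Then f(S_L ∪ S_R) ≥ 0.515 · OPT. -/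

import Mathlib

open Finset

/-!
Adding all of `D_L` to `S_L` gains at most the sum of the individual marginals, which are all small,
while `D_L` has few elements. So `f S_L` already captures nearly all of `f D_L`, namely
`0.85 * 0.495 * OPT - 0.95 * 5e-5 * 100 * OPT = 0.416 * OPT`. As `S_L` is small, `S_R` has at least
`0.99 * k` elements, which contribute a further `0.099 * OPT`.
-/

section Submodular

variable {E M : Type*} [DecidableEq E] [AddCommGroup M] [PartialOrder M]

/-- Submodularity of a set function, in the form of diminishing returns: the marginal value of an
element outside `Y` is at least as large over a subset of `Y` as over `Y`. -/
def IsSubmodular (f : Finset E → M) : Prop :=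
  ∀ X Y : Finset E, X ⊆ Y → ∀ e ∉ Y, f (insert e Y) - f Y ≤ f (insert e X) - f X

variable [IsOrderedAddMonoid M] {f : Finset E → M}

theorem IsSubmodular.map_union_le_add_sum (hf : IsSubmodular f) (S T : Finset E) :
    f (S ∪ T) ≤ f S + ∑ e ∈ T, (f (insert e S) - f S) := by
  induction T using Finset.induction_on with
  | empty => simp
  | insert e T heT ih =>
    rw [union_insert, sum_insert heT]
    by_cases heS : e ∈ S
    · simpa [insert_eq_of_mem (mem_union_left T heS), insert_eq_of_mem heS] using ih
    · have hmarginal : f (insert e (S ∪ T)) - f (S ∪ T) ≤ f (insert e S) - f S :=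
        hf S (S ∪ T) subset_union_left e (by simp [heS, heT])
      calc f (insert e (S ∪ T))
          = (f (insert e (S ∪ T)) - f (S ∪ T)) + f (S ∪ T) := (sub_add_cancel _ _).symm
        _ ≤ (f (insert e S) - f S) + (f S + ∑ e ∈ T, (f (insert e S) - f S)) :=
            add_le_add hmarginal ih
        _ = f S + ((f (insert e S) - f S) + ∑ e ∈ T, (f (insert e S) - f S)) :=
            add_left_comm _ _ _

theorem IsSubmodular.map_le_add_card_nsmul (hf : IsSubmodular f) (hmono : Monotone f)
    {S T : Finset E} {c : M} (hc : ∀ e ∈ T, f (insert e S) - f S ≤ c) :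
    f T ≤ f S + #T • c :=
  calc f T ≤ f (S ∪ T) := hmono subset_union_right
    _ ≤ f S + ∑ e ∈ T, (f (insert e S) - f S) := hf.map_union_le_add_sum S T
    _ ≤ f S + #T • c := by gcongr; exact sum_le_card_nsmul T _ c hc

end Submodular

/-- `α` is the value of `D_L` relative to `OPT`; `δ` and `ρ` are the sizes of `D_L` and `S_R`
relative to `k`; `τ` and `κ` are the high and low marginal thresholds in units of `OPT / k`. -/
theorem stmt_13_general {E R : Type*} [DecidableEq E]
    [Field R] [LinearOrder R] [IsStrictOrderedRing R]
    {f : Finset E → R} (hf : IsSubmodular f) (hmono : Monotone f)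
    {D_L S_L S_R : Finset E} {k OPT α δ ρ τ κ : R}
    (hk : 0 < k) (hOPT : 0 ≤ OPT) (hτ : 0 ≤ τ) (hκ : 0 ≤ κ)
    (hDLval : α * OPT ≤ f D_L) (hDLcard : #D_L ≤ δ * k) (hSRcard : ρ * k ≤ #S_R)
    (hthr : ∀ e ∈ D_L, f (insert e S_L) - f S_L ≤ τ * OPT / k)
    (hSR : f S_L + #S_R * (κ * OPT / k) ≤ f (S_L ∪ S_R)) :
    (α - δ * τ + ρ * κ) * OPT ≤ f (S_L ∪ S_R) := by
  have hDL : f D_L ≤ f S_L + #D_L * (τ * OPT / k) := by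
    simpa only [nsmul_eq_mul] using hf.map_le_add_card_nsmul hmono hthr
  have hloss : #D_L * (τ * OPT / k) ≤ δ * τ * OPT :=
    calc #D_L * (τ * OPT / k) ≤ δ * k * (τ * OPT / k) := by gcongr
      _ = δ * τ * OPT := by field_simp
  have hgain : ρ * κ * OPT ≤ #S_R * (κ * OPT / k) :=
    calc ρ * κ * OPT = ρ * k * (κ * OPT / k) := by field_simp
      _ ≤ #S_R * (κ * OPT / k) := by gcongr
  linarith

/-- The |S| = k case of the dense-instance algorithm analysis. -/
theorem stmt_13 {E : Type*} [DecidableEq E]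
    (k : ℕ) (hk : 100 ≤ k)
    (γ η : ℝ) (hγ : γ = 1e-2) (hη : η = 5e-5)
    (f : Finset E → ℝ)
    (hnonneg : ∀ X : Finset E, 0 ≤ f X)
    (hmono : ∀ X Y : Finset E, X ⊆ Y → f X ≤ f Y)
    (hsubmod : ∀ X Y : Finset E, X ⊆ Y → ∀ e ∉ Y,
      f (insert e Y) - f Y ≤ f (insert e X) - f X)
    (D D_L S_L S_R : Finset E) (OPT : ℝ) (hOPT0 : 0 ≤ OPT)
    (hDval : f D ≥ (1 - γ) / 2 * OPT)
    (hdisj : S_L ∩ S_R = ∅)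
    (hSLcard : (S_L.card : ℝ) < (k : ℝ) / 100)
    (hfull : S_L.card + S_R.card = k)
    (hDLsub : D_L ⊆ D)
    (hDLcard : (D_L.card : ℝ) ≤ 0.95 * η * k)
    (hDLval : f D_L ≥ 0.85 * f D)
    (hthr : ∀ e ∈ D_L, f (insert e S_L) - f S_L ≤ 100 * OPT / k)
    (hSR : f (S_L ∪ S_R) ≥ f S_L + (S_R.card : ℝ) * (OPT / (10 * k))) :
    f (S_L ∪ S_R) ≥ 0.515 * OPT := by
  subst hγ hη
  have hkpos : (0 : ℝ) < k := mod_cast (by omega : 0 < k)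
  have hcard : (#S_L : ℝ) + #S_R = k := mod_cast hfull
  have hgain : f S_L + #S_R * (0.1 * OPT / k) ≤ f (S_L ∪ S_R) := by
    convert hSR using 3
    ring
  have hbound := stmt_13_general hsubmod hmono (α := 0.85 * 0.495) (ρ := 0.99) hkpos hOPT0
    (by norm_num) (by norm_num) (by linarith) hDLcard (by linarith) hthr hgain
  linarith
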